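/- arXiv:2505.23445 — 2 statements merged into one kernel-verified Lean document; each statement's English description precedes it below -/
import Mathlib

section
/- Let G be exponentially distributed with rate 1, and given G = g let ξ have conditional density f(x) = g·exp(-g((x/η)^{b-1} - 1))·(x^{b-2}/η^{b-1})·(b-1)·1[x > η], with η > 0, b > 1. Set M = G + ξ. Then P(M > m) ~ η^{b-1}/m^{b-1} as m → ∞; more precisely P(M>m) = η^{b-1}/m^{b-1} + 2(b-1)η^{2b-2}/m^{2b-1} + 3(b-1)(3b-2)η^{3b-3}/m^{3b-1} + O(m^{-(4b-1)}). -/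
open MeasureTheory ProbabilityTheory Filter Asymptotics Real


lemma exp_aux (s : ℝ) (hs : 0 ≤ s) : |exp s - (1 + s + s^2/2)| ≤ s^3 * exp s := by
  have h := Complex.norm_exp_sub_sum_le_norm_mul_exp (s : ℂ) 3
  have e : Complex.exp (s:ℂ) - ∑ m ∈ Finset.range 3, (s:ℂ)^m / (m.factorial : ℂ)
      = ((exp s - (1 + s + s^2/2) : ℝ) : ℂ) := by
    simp [Finset.sum_range_succ, Nat.factorial]
  rw [e, Complex.norm_real, Complex.norm_real, norm_eq_abs, norm_eq_abs, abs_of_nonneg hs] at h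
  exact h

lemma pow_aux (a : ℝ) : ∃ K, 0 ≤ K ∧ ∀ t ∈ Set.Icc (0:ℝ) (1/2),
    |(1 - t)^a - (1 - a * t + a * (a-1) / 2 * t^2)| ≤ K * t^3 := by
  have hu : UniqueDiffOn ℝ (Set.Icc (0:ℝ) (1/2)) := uniqueDiffOn_Icc (by norm_num)
  have hd : ∀ (p : ℝ), ∀ t ∈ Set.Icc (0:ℝ) (1/2),
      derivWithin (fun t : ℝ => (1 - t)^p) (Set.Icc 0 (1/2)) t = -p * (1-t)^(p-1) := by
    intro p t ht
    have h1 : (1:ℝ) - t ≠ 0 := by have := ht.2; linarith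
    have h := (((hasDerivAt_id t).const_sub 1).rpow_const (p := p) (Or.inl h1))
    have h2 := h.hasDerivWithinAt (s := Set.Icc 0 (1/2)) |>.derivWithin (hu t ht)
    simp only [id] at h2
    rw [h2]; ring
  obtain ⟨C, hC⟩ := exists_taylor_mean_remainder_bound (f := fun t : ℝ => (1 - t)^a) (n := 2)
    (a := 0) (b := 1/2) (by norm_num) (by
      apply ContDiffOn.rpow_const_of_ne
      · fun_prop
      · intro x hx; have := hx.2; linarith)
  have h0 : (0:ℝ) ∈ Set.Icc (0:ℝ) (1/2) := by constructor <;> norm_num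
  have d1 : ∀ t ∈ Set.Icc (0:ℝ) (1/2), iteratedDerivWithin 1 (fun t : ℝ => (1 - t)^a) (Set.Icc 0 (1/2)) t = -a * (1-t)^(a-1) := by
    intro t ht
    rw [iteratedDerivWithin_one, hd a t ht]
  have d2 : iteratedDerivWithin 2 (fun t : ℝ => (1 - t)^a) (Set.Icc 0 (1/2)) 0 = a*(a-1) := by
    rw [iteratedDerivWithin_succ, derivWithin_congr d1 (d1 0 h0), derivWithin_const_mul_field, hd _ _ h0]
    simp
    ring
  refine ⟨max C 0, le_max_right _ _, fun t ht => ?_⟩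
  have := hC t ht
  simp only [taylorWithinEval_succ, taylor_within_zero_eval, Nat.reduceAdd, zero_add, d2, d1 0 h0] at this
  simp [Nat.factorial] at this
  have h3 : C * t^3 ≤ max C 0 * t^3 := by
    gcongr
    · exact pow_nonneg ht.1 3
    · exact le_max_left _ _
  refine le_trans (le_of_eq ?_) (this.trans h3)
  congr 1; ring

lemma int_aux (n : ℕ) (r : ℝ) (hr : 0 < r) :
    IntegrableOn (fun g : ℝ => g^n * exp (-(r*g))) (Set.Ioi 0) ∧
    ∫ g in Set.Ioi (0:ℝ), g^n * exp (-(r*g)) = n.factorial / r^(n+1) := by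
  have h := Real.integral_rpow_mul_exp_neg_mul_Ioi (a := n+1) (by positivity) hr
  simp only [add_sub_cancel_right, rpow_natCast] at h
  have e : ∫ g in Set.Ioi (0:ℝ), g^n * exp (-(r*g)) = n.factorial / r^(n+1) := by
    rw [h, Real.Gamma_nat_eq_factorial]
    rw [show ((n:ℝ)+1) = ((n+1 : ℕ):ℝ) by push_cast; ring, rpow_natCast, one_div, inv_pow]
    field_simp
  refine ⟨?_, e⟩
  by_contra hc
  rw [integral_undef hc] at e
  have : (0:ℝ) < n.factorial / r^(n+1) := by positivity
  linarith

lemma phi_aux (a c m : ℝ) (hc : 0 < c) (hm : 0 < m) :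
    IntegrableOn (fun g : ℝ => exp (-(c*g)) * (1 + a * (c*g) * (g/m) + (a^2 * (c*g)^2/2 - a*(a-1)/2*(c*g)) * (g/m)^2)) (Set.Ioi 0) ∧
    ∫ g in Set.Ioi (0:ℝ), exp (-(c*g)) * (1 + a * (c*g) * (g/m) + (a^2 * (c*g)^2/2 - a*(a-1)/2*(c*g)) * (g/m)^2)
     = 1/c + 2*a/(c^2*m) + 3*a*(3*a+1)/(c^3*m^2) := by
  obtain ⟨i0, e0⟩ := int_aux 0 c hc
  obtain ⟨i2, e2⟩ := int_aux 2 c hc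
  obtain ⟨i3, e3⟩ := int_aux 3 c hc
  obtain ⟨i4, e4⟩ := int_aux 4 c hc
  have e : (fun g : ℝ => exp (-(c*g)) * (1 + a * (c*g) * (g/m) + (a^2 * (c*g)^2/2 - a*(a-1)/2*(c*g)) * (g/m)^2))
    = fun g => ((g^0 * exp (-(c*g)) + a*c/m * (g^2 * exp (-(c*g)))) + a^2*c^2/2/m^2 * (g^4 * exp (-(c*g))))
        + (- (a*(a-1)/2*c/m^2)) * (g^3 * exp (-(c*g))) := by
    funext g; field_simp; ring
  rw [e]
  have j1 : IntegrableOn (fun g : ℝ => g^0 * exp (-(c*g)) + a*c/m * (g^2 * exp (-(c*g)))) (Set.Ioi 0) :=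
    i0.add (i2.const_mul _)
  have j2 : IntegrableOn (fun g : ℝ => (g^0 * exp (-(c*g)) + a*c/m * (g^2 * exp (-(c*g)))) + a^2*c^2/2/m^2 * (g^4 * exp (-(c*g)))) (Set.Ioi 0) :=
    j1.add (i4.const_mul _)
  refine ⟨j2.add (i3.const_mul _), ?_⟩
  rw [integral_add j2 (i3.const_mul _),
    integral_add j1 (i4.const_mul _),
    integral_add i0 (i2.const_mul _), integral_const_mul, integral_const_mul, integral_const_mul,
    e0, e2, e3, e4]
  simp [Nat.factorial]
  field_simp
  ring

lemma inner_aux (η b g y : ℝ) (hη : 0 < η) (hb : 1 < b) (hg : 0 < g) (hy : η ≤ y) :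
    ∫⁻ x in Set.Ioi y, ENNReal.ofReal (Real.exp (-g) *
            (g * Real.exp (-g * ((x / η) ^ (b - 1) - 1)) *
              x ^ (b - 2) / η ^ (b - 1) * (b - 1))) = ENNReal.ofReal (exp (-(g * (y/η)^(b-1)))) := by
  have hd : ∀ x ∈ Set.Ici y, HasDerivAt (fun x => - exp (-(g * (x/η)^(b-1)))) (Real.exp (-g) *
            (g * Real.exp (-g * ((x / η) ^ (b - 1) - 1)) *
              x ^ (b - 2) / η ^ (b - 1) * (b - 1))) x := by
    intro x hx
    have hx0 : 0 < x := lt_of_lt_of_le hη (hy.trans hx)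
    have h := (((((hasDerivAt_id x).div_const η).rpow_const (p := b-1)
      (Or.inl (by simp only [id]; positivity))).const_mul g).neg.exp).neg
    have h' : HasDerivAt (fun x => - exp (-(g * (x/η)^(b-1))))
      (-(exp (-(g * (x/η)^(b-1))) * -(g * (1 / η * (b - 1) * (x / η) ^ (b - 1 - 1))))) x := h
    refine h'.congr_deriv ?_
    have e1 : exp (-g) * exp (-g * ((x / η) ^ (b - 1) - 1)) = exp (-(g * (x/η)^(b-1))) := by
      rw [← exp_add]; congr 1; ring
    have e2 : (x/η)^(b-1-1) * (1/η) = x^(b-2) / η^(b-1) := by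
      rw [show b-1-1 = b-2 by ring, div_rpow hx0.le hη.le, show b - 1 = (b-2)+1 by ring,
        rpow_add hη, rpow_one]
      field_simp
    rw [← e1]
    linear_combination (exp (-g) * exp (-g * ((x / η) ^ (b - 1) - 1)) * g * (b-1)) * e2
  have hn : ∀ x ∈ Set.Ioi y, 0 ≤ Real.exp (-g) *
            (g * Real.exp (-g * ((x / η) ^ (b - 1) - 1)) *
              x ^ (b - 2) / η ^ (b - 1) * (b - 1)) := by
    intro x hx
    have hx0 : 0 < x := lt_of_lt_of_le hη (hy.trans hx.le)
    have : 0 < b - 1 := by linarith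
    positivity
  have ht : Tendsto (fun x => - exp (-(g * (x/η)^(b-1)))) atTop (nhds 0) := by
    rw [← neg_zero]
    apply Tendsto.neg
    apply tendsto_exp_neg_atTop_nhds_zero.comp
    apply Tendsto.const_mul_atTop hg
    exact (tendsto_rpow_atTop (by linarith)).comp (tendsto_id.atTop_div_const hη)
  have hi := integrableOn_Ioi_deriv_of_nonneg' hd hn ht
  rw [← ofReal_integral_eq_lintegral_ofReal hi ((ae_restrict_iff' measurableSet_Ioi).2 (ae_of_all _ hn)),
    integral_Ioi_of_hasDerivAt_of_nonneg' hd hn ht]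
  simp

lemma F_aux (η a m : ℝ) (hη : 0 < η) (ha : 0 < a) :
    Continuous (fun g : ℝ => exp (-(g * (max η (m-g)/η)^a))) ∧
    IntegrableOn (fun g : ℝ => exp (-(g * (max η (m-g)/η)^a))) (Set.Ioi 0) ∧
    ∀ g, 0 < g → exp (-(g * (max η (m-g)/η)^a)) ≤ exp (-g) := by
  have hc : Continuous (fun g : ℝ => exp (-(g * (max η (m-g)/η)^a))) := by
    have : Continuous (fun g : ℝ => (max η (m-g)/η)^a) :=
      Continuous.rpow_const (by fun_prop) (fun x => Or.inr ha.le)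
    fun_prop
  have hle : ∀ g, 0 < g → exp (-(g * (max η (m-g)/η)^a)) ≤ exp (-g) := by
    intro g hg
    have : 1 ≤ (max η (m-g)/η)^a :=
      one_le_rpow ((one_le_div hη).2 (le_max_left _ _)) ha.le
    apply exp_le_exp.2
    nlinarith
  refine ⟨hc, ?_, hle⟩
  have := (int_aux 0 1 one_pos).1
  simp only [pow_zero, one_mul] at this
  refine this.mono' hc.aestronglyMeasurable ?_
  refine (ae_restrict_iff' measurableSet_Ioi).2 (ae_of_all _ fun g hg => ?_)
  rw [norm_of_nonneg (exp_pos _).le]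
  exact hle g hg

lemma prob_aux {Ω : Type*} [MeasureSpace Ω] [IsProbabilityMeasure (ℙ : Measure Ω)]
    (G ξ : Ω → ℝ) (hG : Measurable G) (hξ : Measurable ξ) (η b : ℝ) (hη : 0 < η)
    (hlaw : Measure.map (fun ω => (G ω, ξ ω)) ℙ =
      (volume : Measure (ℝ × ℝ)).withDensity (fun p =>
        ENNReal.ofReal (if 0 < p.1 ∧ η < p.2 then
          Real.exp (-p.1) *
            (p.1 * Real.exp (-p.1 * ((p.2 / η) ^ (b - 1) - 1)) *
              p.2 ^ (b - 2) / η ^ (b - 1) * (b - 1))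
        else 0))) (hb : 1 < b) (m : ℝ) :
    (ℙ {ω | m < G ω + ξ ω}).toReal = ∫ g in Set.Ioi (0:ℝ), exp (-(g * (max η (m-g)/η)^(b-1))) := by
  have hS : MeasurableSet {p : ℝ × ℝ | m < p.1 + p.2} :=
    measurableSet_lt measurable_const (by fun_prop)
  have h1 : ℙ {ω | m < G ω + ξ ω} = Measure.map (fun ω => (G ω, ξ ω)) ℙ {p : ℝ × ℝ | m < p.1 + p.2} := by
    rw [Measure.map_apply (hG.prodMk hξ) hS]; rfl
  have hT : MeasurableSet {p : ℝ × ℝ | 0 < p.1 ∧ η < p.2} :=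
    (measurableSet_lt measurable_const measurable_fst).inter (measurableSet_lt measurable_const measurable_snd)
  rw [h1, hlaw, withDensity_apply _ hS, ← lintegral_indicator hS, Measure.volume_eq_prod,
    lintegral_prod]
  · obtain ⟨hc, hi, -⟩ := F_aux η (b-1) m hη (by linarith)
    rw [integral_eq_lintegral_of_nonneg_ae (ae_of_all _ fun _ => (exp_pos _).le) hc.aestronglyMeasurable,
      ← lintegral_indicator measurableSet_Ioi]
    congr 2
    funext g
    by_cases hg : 0 < g
    · rw [Set.indicator_of_mem (by exact hg), ← inner_aux η b g _ hη hb hg (le_max_left _ _),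
        ← lintegral_indicator measurableSet_Ioi]
      congr 1
      funext x
      simp only [Set.indicator, Set.mem_ofPred_eq, Set.mem_Ioi, hg, true_and, max_lt_iff]
      by_cases hx : η < x <;> by_cases hx2 : m < g + x
      · rw [if_pos hx2, if_pos hx, if_pos ⟨hx, by linarith⟩]
      · rw [if_neg hx2, if_neg (fun h => hx2 (by linarith [h.2]))]
      · simp [hx]
      · simp [hx]
    · rw [Set.indicator_of_notMem (by exact hg)]
      simp [hg, Set.indicator]
  · apply Measurable.aemeasurable
    apply Measurable.indicator _ hS
    apply ENNReal.measurable_ofReal.comp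
    apply Measurable.ite hT _ measurable_const
    fun_prop

lemma u_aux (u : ℝ) (hu : 0 ≤ u) : u ≤ 1 + u^3 ∧ u^2 ≤ 1 + u^3 := by
  have h3 : 0 ≤ u^3 := by positivity
  rcases le_total u 1 with h | h
  · exact ⟨by linarith, by nlinarith⟩
  · have := le_self_pow₀ h (n := 3) (by norm_num)
    have := pow_le_pow_right₀ h (show 2 ≤ 3 by norm_num)
    constructor <;> linarith

lemma A_aux (a : ℝ) (ha : 0 < a) : ∃ K, 0 ≤ K ∧ ∀ t ∈ Set.Icc (0:ℝ) (1/2), ∀ u, 0 ≤ u →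
    |exp (-(u * (1-t)^a)) - exp (-u) * (1 + a * u * t + (a^2 * u^2/2 - a*(a-1)/2*u) * t^2)|
      ≤ K * t^3 * (1 + u^3) * exp (-((1/2)^a * u)) := by
  obtain ⟨K, hK, h⟩ := pow_aux a
  set K2 := |a*(a-1)/2| + K with hK2
  have hK20 : 0 ≤ K2 := by positivity
  set K1 := a + K2 with hK1
  refine ⟨K1^3 + K + K2 * (K1 + a), by positivity, fun t ht u hu => ?_⟩
  obtain ⟨ht0, ht1⟩ := ht
  have hR := h t ⟨ht0, ht1⟩
  have hq0 : (1-t)^a ≤ 1 := rpow_le_one (by linarith) (by linarith) ha.le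
  have hqk : (1/2:ℝ)^a ≤ (1-t)^a := rpow_le_rpow (by norm_num) (by linarith) ha.le
  have hk1 : (1/2:ℝ)^a ≤ 1 := rpow_le_one (by norm_num) (by norm_num) ha.le
  set κ := (1/2:ℝ)^a
  generalize hq : 1 - (1-t)^a = q
  have hqe : (1-t)^a = 1 - q := by linarith
  rw [hqe] at hR hq0 hqk ⊢
  generalize hr : (1 - q - (1 - a * t + a * (a-1) / 2 * t^2)) = r at hR
  have hqr : q = a*t - a*(a-1)/2*t^2 - r := by linarith
  have ht2 : t^3 ≤ t^2 := by nlinarith [sq_nonneg t]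
  have ht21 : t^2 ≤ t := by nlinarith
  have h2 : |q - a*t| ≤ K2 * t^2 := by
    rw [show q - a*t = -(a*(a-1)/2*t^2 + r) by rw [hqr]; ring, abs_neg]
    refine (abs_add_le _ _).trans ?_
    rw [abs_mul, abs_of_nonneg (sq_nonneg t), hK2]
    nlinarith
  have h1 : q ≤ K1 * t := by
    have := (abs_le.1 h2).2
    rw [hK1]; nlinarith
  have hq00 : 0 ≤ q := by linarith
  have hs : 0 ≤ u*q := by positivity
  have he := exp_aux (u*q) hs
  have hmain : exp (-(u * (1-q))) - exp (-u) * (1 + a * u * t + (a^2 * u^2/2 - a*(a-1)/2*u) * t^2)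
     = exp (-u) * (exp (u*q) - (1 + u*q + (u*q)^2/2)) + exp (-u) * (-(u*r) + u^2/2*((q-a*t)*(q+a*t))) := by
    rw [show -(u*(1-q)) = -u + u*q by ring, exp_add, hqr]
    ring
  have hexp : exp (-u) ≤ exp (-(κ*u)) := exp_le_exp.2 (by nlinarith)
  have hexp2 : exp (-u) * exp (u*q) ≤ exp (-(κ*u)) := by
    rw [← exp_add]; exact exp_le_exp.2 (by nlinarith)
  have b1 : |exp (-u) * (exp (u*q) - (1 + u*q + (u*q)^2/2))| ≤ K1^3 * t^3 * (1+u^3) * exp (-(κ*u)) := by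
    rw [abs_mul, abs_of_pos (exp_pos _)]
    calc _ ≤ exp (-u) * ((u*q)^3 * exp (u*q)) := by gcongr
      _ = (u*q)^3 * (exp (-u) * exp (u*q)) := by ring
      _ ≤ (u*(K1*t))^3 * exp (-(κ*u)) := by gcongr
      _ = K1^3 * t^3 * u^3 * exp (-(κ*u)) := by ring
      _ ≤ _ := by gcongr; linarith
  have hu1 := (u_aux u hu).1
  have hu2 := (u_aux u hu).2
  have b2 : |exp (-u) * (-(u*r) + u^2/2*((q-a*t)*(q+a*t)))| ≤ exp (-(κ*u)) * ((1+u^3) * (K*t^3) + (1+u^3) * ((K2*t^2)*((K1+a)*t))) := by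
    rw [abs_mul, abs_of_pos (exp_pos _)]
    have e1 : |-(u*r)| ≤ (1+u^3) * (K*t^3) := by
      rw [abs_neg, abs_mul, abs_of_nonneg hu]; gcongr
    have e2 : |u^2/2*((q-a*t)*(q+a*t))| ≤ (1+u^3) * ((K2*t^2)*((K1+a)*t)) := by
      rw [abs_mul, abs_mul, abs_of_nonneg (by positivity : 0 ≤ u^2/2), abs_of_nonneg (by positivity : 0 ≤ q + a*t)]
      gcongr
      · linarith [sq_nonneg u]
      · linarith
    gcongr
    exact (abs_add_le _ _).trans (add_le_add e1 e2)
  rw [hmain]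
  refine (abs_add_le _ _).trans ((add_le_add b1 b2).trans (le_of_eq ?_))
  ring

lemma B_aux (a : ℝ) (ha : 0 < a) : ∃ K, 0 ≤ K ∧ ∀ t, 1/2 ≤ t → ∀ u, 0 ≤ u →
    |exp (-u) * (1 + a * u * t + (a^2 * u^2/2 - a*(a-1)/2*u) * t^2)|
      ≤ K * t^3 * (1 + u^3) * exp (-((1/2)^a * u)) := by
  refine ⟨8 + 4*a + 2*(a^2/2 + |a*(a-1)/2|), by positivity, fun t ht u hu => ?_⟩
  have ht0 : 0 ≤ t := by linarith
  have hk1 : (1/2:ℝ)^a ≤ 1 := rpow_le_one (by norm_num) (by norm_num) ha.le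
  set κ := (1/2:ℝ)^a
  have hexp : exp (-u) ≤ exp (-(κ*u)) := exp_le_exp.2 (by nlinarith)
  have hu1 := (u_aux u hu).1
  have hu2 := (u_aux u hu).2
  have hu0 : 1 ≤ 1 + u^3 := by have : 0 ≤ u^3 := by positivity
                               linarith
  have t2 : t^2 ≤ 2*t^3 := by nlinarith [sq_nonneg t]
  have t1 : t ≤ 4*t^3 := by nlinarith [sq_nonneg t]
  have t0 : 1 ≤ 8*t^3 := by nlinarith [sq_nonneg t]
  rw [abs_mul, abs_of_pos (exp_pos _)]
  calc _ ≤ exp (-(κ*u)) * ((8*t^3)*(1+u^3) + a*(1+u^3)*(4*t^3) + (a^2*(1+u^3)/2 + |a*(a-1)/2| * (1+u^3))*(2*t^3)) := by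
        gcongr
        refine (abs_add_le _ _).trans (add_le_add ((abs_add_le _ _).trans (add_le_add ?_ ?_)) ?_)
        · rw [abs_one]; nlinarith
        · rw [abs_of_nonneg (by positivity)]; gcongr
        · rw [abs_mul, abs_of_nonneg (sq_nonneg t)]
          gcongr
          refine (abs_sub _ _).trans (add_le_add ?_ ?_)
          · rw [abs_of_nonneg (by positivity)]; gcongr
          · rw [abs_mul, abs_of_nonneg hu]; gcongr
    _ = _ := by ring

lemma pt_aux (a : ℝ) (ha : 0 < a) : ∃ K, 0 ≤ K ∧ ∀ η m g : ℝ, 0 < η → 2*η ≤ m → 0 < g →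
    |exp (-(g * (max η (m-g)/η)^a)) - exp (-((m/η)^a*g)) * (1 + a * ((m/η)^a*g) * (g/m) + (a^2 * ((m/η)^a*g)^2/2 - a*(a-1)/2*((m/η)^a*g)) * (g/m)^2)|
      ≤ K * (g/m)^3 * (1 + ((m/η)^a*g)^3) * exp (-((1/2)^a * ((m/η)^a*g))) + exp (-(1/4)*m) * exp (-((1/2)*g)) := by
  obtain ⟨K, hK, hA⟩ := A_aux a ha
  obtain ⟨L, hL, hB⟩ := B_aux a ha
  refine ⟨K + L, by positivity, fun η m g hη hm hg => ?_⟩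
  have hm0 : 0 < m := by linarith
  have hu : 0 ≤ (m/η)^a*g := by positivity
  rcases le_total g (m/2) with h | h
  · have ht : g/m ∈ Set.Icc (0:ℝ) (1/2) := ⟨by positivity, by rw [div_le_iff₀ hm0]; linarith⟩
    have := hA _ ht _ hu
    have e : g * (max η (m-g)/η)^a = (m/η)^a*g * (1-g/m)^a := by
      rw [max_eq_right (by linarith), show (m-g)/η = (m/η)*(1-g/m) by field_simp,
        mul_rpow (by positivity) (by linarith [ht.2])]
      ring
    rw [e]
    refine this.trans ?_
    have p1 : 0 ≤ L * (g/m)^3 * (1 + ((m/η)^a*g)^3) * exp (-((1/2)^a * ((m/η)^a*g))) := by positivity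
    have p2 : 0 ≤ exp (-(1/4)*m) * exp (-((1/2)*g)) := by positivity
    linarith
  · have ht : 1/2 ≤ g/m := by rw [le_div_iff₀ hm0]; linarith
    have := hB _ ht _ hu
    have hF := (F_aux η a m hη ha).2.2 g hg
    have hF2 : exp (-g) ≤ exp (-(1/4)*m) * exp (-((1/2)*g)) := by
      rw [← exp_add]; exact exp_le_exp.2 (by linarith)
    refine (abs_sub _ _).trans ?_
    rw [abs_of_pos (exp_pos _)]
    have p1 : 0 ≤ K * (g/m)^3 * (1 + ((m/η)^a*g)^3) * exp (-((1/2)^a * ((m/η)^a*g))) := by positivity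
    linarith

lemma bound_aux (a η : ℝ) (ha : 0 < a) (hη : 0 < η) : ∃ K, 0 ≤ K ∧ ∀ m : ℝ, 2*η ≤ m →
    |(∫ g in Set.Ioi (0:ℝ), exp (-(g * (max η (m-g)/η)^a))) - (1/(m/η)^a + 2*a/(((m/η)^a)^2*m) + 3*a*(3*a+1)/(((m/η)^a)^3*m^2))|
      ≤ K * (1/(((m/η)^a)^4 * m^3)) + 2 * exp (-(1/4)*m) := by
  obtain ⟨K, hK, h⟩ := pt_aux a ha
  set κ := (1/2:ℝ)^a with hκ
  have hκ0 : 0 < κ := by positivity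
  refine ⟨K * (6/κ^4 + 720/κ^7), by positivity, fun m hm => ?_⟩
  have hm0 : 0 < m := by linarith
  have h' := fun g hg => h η m g hη hm hg
  have hc : 0 < (m/η)^a := by positivity
  generalize (m/η)^a = c at h' hc ⊢
  obtain ⟨ip, ep⟩ := phi_aux a c m hc hm0
  obtain ⟨-, iF, -⟩ := F_aux η a m hη ha
  rw [← ep, ← integral_sub iF ip]
  obtain ⟨i3, e3⟩ := int_aux 3 (κ*c) (by positivity)
  obtain ⟨i6, e6⟩ := int_aux 6 (κ*c) (by positivity)
  obtain ⟨i0, e0⟩ := int_aux 0 (1/2) (by norm_num)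
  have j1 : IntegrableOn (fun g : ℝ => K/m^3 * (g^3 * exp (-(κ*c*g))) + K*c^3/m^3 * (g^6 * exp (-(κ*c*g)))) (Set.Ioi 0) :=
    (i3.const_mul _).add (i6.const_mul _)
  have j2 : IntegrableOn (fun g : ℝ => (K/m^3 * (g^3 * exp (-(κ*c*g))) + K*c^3/m^3 * (g^6 * exp (-(κ*c*g)))) + exp (-(1/4)*m) * (g^0 * exp (-((1/2)*g)))) (Set.Ioi 0) :=
    j1.add (i0.const_mul _)
  have := norm_integral_le_of_norm_le j2 (f := fun g => exp (-(g * (max η (m-g)/η)^a)) - exp (-(c*g)) * (1 + a * (c*g) * (g/m) + (a^2 * (c*g)^2/2 - a*(a-1)/2*(c*g)) * (g/m)^2))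
    ((ae_restrict_iff' measurableSet_Ioi).2 (ae_of_all _ fun g hg => by
      refine (h' g hg).trans (le_of_eq ?_)
      rw [show κ*c*g = κ*(c*g) by ring]
      ring))
  rw [norm_eq_abs] at this
  refine this.trans (le_of_eq ?_)
  rw [integral_add j1 (i0.const_mul _), integral_add (i3.const_mul _) (i6.const_mul _),
    integral_const_mul, integral_const_mul, integral_const_mul, e3, e6, e0]
  simp [Nat.factorial]
  field_simp

theorem exp_heavy_tail_prob {Ω : Type*} [MeasureSpace Ω] [IsProbabilityMeasure (ℙ : Measure Ω)]
    (G ξ : Ω → ℝ) (hG : Measurable G) (hξ : Measurable ξ) (η b : ℝ) (hη : 0 < η)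
    (hlaw : Measure.map (fun ω => (G ω, ξ ω)) ℙ =
      (volume : Measure (ℝ × ℝ)).withDensity (fun p =>
        ENNReal.ofReal (if 0 < p.1 ∧ η < p.2 then
          Real.exp (-p.1) *
            (p.1 * Real.exp (-p.1 * ((p.2 / η) ^ (b - 1) - 1)) *
              p.2 ^ (b - 2) / η ^ (b - 1) * (b - 1))
        else 0))) (hb : 1 < b) :
    ((fun m : ℝ => (ℙ {ω | m < G ω + ξ ω}).toReal)
        ~[atTop] (fun m : ℝ => η ^ (b - 1) / m ^ (b - 1))) ∧
    (fun m : ℝ => (ℙ {ω | m < G ω + ξ ω}).toReal -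
        (η ^ (b - 1) / m ^ (b - 1)
          + 2 * (b - 1) * η ^ (2 * b - 2) / m ^ (2 * b - 1)
          + 3 * (b - 1) * (3 * b - 2) * η ^ (3 * b - 3) / m ^ (3 * b - 1)))
      =O[atTop] (fun m : ℝ => m ^ (-(4 * b - 1))) := by
  obtain ⟨K, hK, hbd⟩ := bound_aux (b-1) η (by linarith) hη
  have hP := fun m => prob_aux G ξ hG hξ η b hη hlaw hb m
  have hO : (fun m : ℝ => (ℙ {ω | m < G ω + ξ ω}).toReal -
        (η ^ (b - 1) / m ^ (b - 1)
          + 2 * (b - 1) * η ^ (2 * b - 2) / m ^ (2 * b - 1)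
          + 3 * (b - 1) * (3 * b - 2) * η ^ (3 * b - 3) / m ^ (3 * b - 1)))
      =O[atTop] (fun m : ℝ => m ^ (-(4 * b - 1))) := by
    have hE : (fun m : ℝ => (K * η^(4*(b-1))) * m ^ (-(4 * b - 1)) + 2 * exp (-(1/4)*m))
        =O[atTop] (fun m : ℝ => m ^ (-(4 * b - 1))) :=
      ((isBigO_refl _ _).const_mul_left _).add
        ((isLittleO_exp_neg_mul_rpow_atTop (by norm_num) _).isBigO.const_mul_left _)
    refine IsBigO.trans (IsBigO.of_bound 1 ?_) hE
    filter_upwards [eventually_ge_atTop (2*η)] with m hm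
    have hm0 : 0 < m := by linarith
    have h := hbd m hm
    rw [norm_eq_abs, norm_eq_abs, one_mul, hP m]
    refine le_trans ?_ (le_trans h (le_trans (le_of_eq ?_) (le_abs_self _)))
    · refine le_of_eq ?_
      congr 2
      rw [div_rpow hm0.le hη.le,
        show 2*b-1 = (b-1)+(b-1)+1 by ring, show 2*b-2 = (b-1)+(b-1) by ring,
        show 3*b-1 = (b-1)+(b-1)+(b-1)+1+1 by ring, show 3*b-3 = (b-1)+(b-1)+(b-1) by ring]
      simp only [rpow_add_one hm0.ne', rpow_add hm0 _ (b-1), rpow_add hη _ (b-1)]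
      have := rpow_pos_of_pos hm0 (b-1)
      have := rpow_pos_of_pos hη (b-1)
      field_simp
      ring
    · congr 1
      rw [div_rpow hm0.le hη.le, rpow_neg hm0.le,
        show 4*b-1 = (b-1)+(b-1)+(b-1)+(b-1)+1+1+1 by ring,
        show 4*(b-1) = (b-1)+(b-1)+(b-1)+(b-1) by ring]
      simp only [rpow_add_one hm0.ne', rpow_add hm0 _ (b-1), rpow_add hη _ (b-1)]
      have := rpow_pos_of_pos hm0 (b-1)
      have := rpow_pos_of_pos hη (b-1)
      field_simp
  refine ⟨?_, hO⟩
  have hlo : ∀ p : ℝ, b - 1 < p → (fun m : ℝ => m^(-p)) =o[atTop] (fun m : ℝ => η ^ (b - 1) / m ^ (b - 1)) := by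
    intro p hp
    have h1 : (fun m : ℝ => m^(-p)) =o[atTop] (fun m : ℝ => m^(-(b-1))) := 
      by
      refine (isLittleO_iff_tendsto' ?_).2 ?_
      · filter_upwards [eventually_gt_atTop 0] with m hm h0
        exact absurd h0 (rpow_pos_of_pos hm _).ne'
      · refine (tendsto_rpow_neg_atTop (y := p - (b-1)) (by linarith)).congr' ?_
        filter_upwards [eventually_gt_atTop 0] with m hm
        rw [← rpow_sub hm]; congr 1; ring
    refine h1.trans_isBigO ?_
    refine IsBigO.of_bound (η^(b-1))⁻¹ ?_
    filter_upwards [eventually_gt_atTop 0] with m hm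
    have := rpow_pos_of_pos hm (b-1)
    have := rpow_pos_of_pos hη (b-1)
    rw [norm_of_nonneg (by positivity), norm_of_nonneg (by positivity), rpow_neg hm.le]
    field_simp
    rfl
  have hsum := ((hO.trans_isLittleO (hlo (4*b-1) (by linarith))).add
    ((hlo (2*b-1) (by linarith)).const_mul_left (2 * (b - 1) * η ^ (2 * b - 2)))).add
    ((hlo (3*b-1) (by linarith)).const_mul_left (3 * (b - 1) * (3 * b - 2) * η ^ (3 * b - 3)))
  refine hsum.congr' ?_ EventuallyEq.rfl
  filter_upwards [eventually_gt_atTop 0] with m hm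
  simp only [Pi.sub_apply, rpow_neg hm.le]
  ring
end

section
/- Let G ~ Exp(1), and given G = g let ξ have conditional density f(x) = g·exp(-g((x/η)^{b-1}-1))·(x^{b-2}/η^{b-1})·(b-1)·1[x>η], with η > 0, b > 2, and set M = G + ξ. Then E[G | M > m] ~ η^{b-1}/m^{b-1} → 0 and E[ξ | M > m] ~ m·(b-1)/(b-2) → ∞ as m → ∞. -/
open MeasureTheory ProbabilityTheory Filter Asymptotics Real

/-- Expectation of `X` conditioned on an event `s` (i.e. `E[X·1ₛ]/P(s)`). -/
noncomputable def condExpEvent {Ω : Type*} [MeasureSpace Ω] (X : Ω → ℝ) (s : Set Ω) : ℝ :=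
  (∫ ω in s, X ω) / (ℙ s).toReal


noncomputable def gdens (η b : ℝ) (p : ℝ × ℝ) : ℝ :=
  if 0 < p.1 ∧ η < p.2 then
          Real.exp (-p.1) *
            (p.1 * Real.exp (-p.1 * ((p.2 / η) ^ (b - 1) - 1)) *
              p.2 ^ (b - 2) / η ^ (b - 1) * (b - 1))
        else 0

lemma gdens_meas (η b : ℝ) : Measurable (gdens η b) := by
  unfold gdens
  refine Measurable.ite ?_ (by fun_prop) measurable_const
  exact (measurableSet_lt measurable_const measurable_fst).inter
    (measurableSet_lt measurable_const measurable_snd)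

lemma inner_int (q : ℕ) (T c : ℝ) (hT : 0 < T) (hc : 0 ≤ c) :
    ∫⁻ g in Set.Ioi (0:ℝ), ENNReal.ofReal (g ^ (q+1) * Real.exp (-(T * g)) * c)
      = ENNReal.ofReal (((q+1).factorial : ℝ) * (1 / T) ^ (q+2) * c) := by
  have h := Real.integral_rpow_mul_exp_neg_mul_Ioi (a := ((q+1 : ℕ) : ℝ) + 1) (r := T)
    (by positivity) hT
  rw [Real.Gamma_nat_eq_factorial] at h
  simp only [add_sub_cancel_right, Real.rpow_natCast] at h
  have h2 : (1 / T) ^ (((q+1 : ℕ) : ℝ) + 1) = (1 / T) ^ (q+2) := by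
    rw [← Real.rpow_natCast]; push_cast; ring_nf
  rw [h2] at h
  have hi : Integrable (fun g : ℝ => g ^ (q+1) * Real.exp (-(T * g)))
      (volume.restrict (Set.Ioi 0)) := by
    by_contra hn
    rw [integral_undef hn] at h
    have : 0 < (1 / T) ^ (q+2) * ((q+1).factorial : ℝ) := by positivity
    linarith
  rw [← ofReal_integral_eq_lintegral_ofReal (hi.mul_const c), integral_mul_const, h]
  · congr 1; ring
  · refine (ae_restrict_iff' measurableSet_Ioi).2 (ae_of_all _ fun g hg => ?_)
    have : 0 < g := hg
    simp only [Pi.zero_apply]; positivity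

lemma outer_int (x s C : ℝ) (hx : 0 < x) (hs : s < -1) (hC : 0 ≤ C) :
    ∫⁻ y in Set.Ioi x, ENNReal.ofReal (C * y ^ s)
      = ENNReal.ofReal (C * (x ^ (s+1) / (-(s + 1)))) := by
  have hi := integrableOn_Ioi_rpow_of_lt hs hx
  have h := integral_Ioi_rpow_of_lt hs hx
  rw [← ofReal_integral_eq_lintegral_ofReal (hi.const_mul C), integral_const_mul, h]
  · congr 2; rw [neg_div, div_neg]
  · refine (ae_restrict_iff' measurableSet_Ioi).2 (ae_of_all _ fun g hg => ?_)
    have : 0 < g := hx.trans hg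
    simp only [Pi.zero_apply]; positivity

section
variable {Ω : Type*} [MeasureSpace Ω]
    (G ξ : Ω → ℝ) (hG : Measurable G) (hξ : Measurable ξ) (η b : ℝ) (hη : 0 < η)
    (hlaw : Measure.map (fun ω => (G ω, ξ ω)) ℙ =
      (volume : Measure (ℝ × ℝ)).withDensity (fun p => ENNReal.ofReal (gdens η b p)))
    (hb : 2 < b)

include hG hξ hη hlaw hb

lemma key_lint (q : ℕ) (r x : ℝ) (hx : η ≤ x) (hr : r < (b - 1) * (q + 1)) :
    ∫⁻ ω in {ω | x < ξ ω}, ENNReal.ofReal (G ω ^ q * ξ ω ^ r) =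
      ENNReal.ofReal (((q+1).factorial : ℝ) * (b - 1) * η ^ ((b-1) * (q+1)) *
        (x ^ (r - (b-1) * (q+1)) / ((b-1)*(q+1) - r))) := by
  have hx0 : 0 < x := hη.trans_le hx
  have hS : MeasurableSet {p : ℝ × ℝ | x < p.2} := measurableSet_lt measurable_const measurable_snd
  have hf : Measurable (fun p : ℝ × ℝ => ENNReal.ofReal (p.1 ^ q * p.2 ^ r)) := by fun_prop
  have hd : Measurable (fun p => ENNReal.ofReal (gdens η b p)) :=
    (gdens_meas η b).ennreal_ofReal
  have e1 : ∫⁻ ω in {ω | x < ξ ω}, ENNReal.ofReal (G ω ^ q * ξ ω ^ r)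
      = ∫⁻ p, {p : ℝ × ℝ | x < p.2}.indicator
          (fun p => ENNReal.ofReal (p.1 ^ q * p.2 ^ r)) p
          ∂(Measure.map (fun ω => (G ω, ξ ω)) ℙ) := by
    rw [lintegral_map (hf.indicator hS) (hG.prodMk hξ),
      ← lintegral_indicator (measurableSet_lt measurable_const hξ)]
    rfl
  rw [e1, hlaw, lintegral_withDensity_eq_lintegral_mul _ hd (hf.indicator hS),
    Measure.volume_eq_prod, lintegral_prod_symm _ (hd.mul (hf.indicator hS)).aemeasurable]
  have e2 := outer_int x (r - (b-1)*(q+1) - 1)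
    (((q+1).factorial : ℝ) * (b - 1) * η ^ ((b-1) * (q+1))) hx0 (by linarith)
    (by have : 0 < b - 1 := by linarith
        positivity)
  rw [sub_add_cancel, neg_sub] at e2
  rw [← e2]
  rw [← lintegral_indicator measurableSet_Ioi]
  refine lintegral_congr fun y => ?_
  by_cases hy : x < y
  swap
  · simp [hy]
  have hy0 : 0 < y := hx0.trans hy
  have hb1 : 0 < b - 1 := by linarith
  have hT : 0 < (y / η) ^ (b - 1) := by positivity
  rw [Set.indicator_of_mem (show y ∈ Set.Ioi x from hy)]
  have e3 := inner_int q ((y / η) ^ (b - 1)) (y ^ (b-2) / η ^ (b-1) * (b-1) * y ^ r) hT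
    (by positivity)
  have e4 : ((q+1).factorial : ℝ) * (1 / (y / η) ^ (b - 1)) ^ (q+2) *
      (y ^ (b-2) / η ^ (b-1) * (b-1) * y ^ r) =
      ((q+1).factorial : ℝ) * (b - 1) * η ^ ((b-1) * (q+1)) * y ^ (r - (b-1)*(q+1) - 1) := by
    rw [one_div, ← Real.rpow_neg (by positivity), ← Real.rpow_natCast, ← Real.rpow_mul (by positivity),
      Real.div_rpow hy0.le hη.le]
    have a1 : y ^ (r - (b-1)*(q+1) - 1) = y ^ (-(b-1) * ((q+2 : ℕ):ℝ)) * y ^ (b-2) * y ^ r := by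
      rw [← Real.rpow_add hy0, ← Real.rpow_add hy0]; congr 1; push_cast; ring
    have a2 : η ^ (-(b-1) * ((q+2 : ℕ):ℝ)) * η ^ (b-1) * η ^ ((b-1) * (q+1 : ℝ)) = 1 := by
      rw [← Real.rpow_add hη, ← Real.rpow_add hη]
      refine (congrArg (fun t => η ^ t) ?_).trans (Real.rpow_zero _)
      push_cast; ring
    have p1 : 0 < η ^ (-(b-1) * ((q+2 : ℕ):ℝ)) := by positivity
    have p2 : 0 < η ^ (b-1) := by positivity
    rw [a1]
    generalize η ^ (-(b-1) * ((q+2 : ℕ):ℝ)) = u at *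
    generalize η ^ (b-1) = v at *
    generalize η ^ ((b-1) * (q+1 : ℝ)) = w at *
    field_simp
    linear_combination (-1) * a2
  rw [← e4, ← e3, ← lintegral_indicator measurableSet_Ioi]
  refine lintegral_congr fun g => ?_
  have hmem : (g, y) ∈ {p : ℝ × ℝ | x < p.2} := hy
  simp only [Pi.mul_apply]
  rw [Set.indicator_of_mem hmem]
  by_cases hg : 0 < g
  · rw [Set.indicator_of_mem (show g ∈ Set.Ioi 0 from hg)]
    have : gdens η b (g, y) = Real.exp (-g) *
            (g * Real.exp (-g * ((y / η) ^ (b - 1) - 1)) *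
              y ^ (b - 2) / η ^ (b - 1) * (b - 1)) := by
      simp [gdens, hg, hx.trans_lt hy]
    have he : Real.exp (-g) * Real.exp (-g * ((y / η) ^ (b - 1) - 1))
      = Real.exp (-((y / η) ^ (b - 1) * g)) := by
      rw [← Real.exp_add]; congr 1; ring
    rw [← ENNReal.ofReal_mul (by rw [this]; positivity), this, ← he]
    congr 1; ring
  · simp [gdens, hg]

lemma ae_pos : ∀ᵐ ω ∂(ℙ : Measure Ω), 0 < G ω ∧ η < ξ ω := by
  have hS : MeasurableSet {p : ℝ × ℝ | 0 < p.1 ∧ η < p.2} :=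
   (measurableSet_lt measurable_const measurable_fst).inter
    (measurableSet_lt measurable_const measurable_snd)
  have : ∀ᵐ p ∂(Measure.map (fun ω => (G ω, ξ ω)) ℙ), 0 < p.1 ∧ η < p.2 := by
    rw [hlaw, ae_withDensity_iff (gdens_meas η b).ennreal_ofReal]
    refine ae_of_all _ fun p hp => ?_
    by_contra h
    exact hp (by simp [gdens, h])
  exact (ae_map_iff (hG.prodMk hξ).aemeasurable hS).1 this

lemma key_int (q : ℕ) (r x : ℝ) (hx : η ≤ x) (hr : r < (b - 1) * (q + 1)) :
    Integrable (fun ω => G ω ^ q * ξ ω ^ r) ℙ ∧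
    ∫ ω in {ω | x < ξ ω}, G ω ^ q * ξ ω ^ r =
      (((q+1).factorial : ℝ) * (b - 1) * η ^ ((b-1) * (q+1)) *
        (x ^ (r - (b-1) * (q+1)) / ((b-1)*(q+1) - r))) := by
  have hpos := ae_pos G ξ hG hξ η b hη hlaw hb
  have hnn : 0 ≤ᵐ[ℙ] (fun ω => G ω ^ q * ξ ω ^ r) := by
    filter_upwards [hpos] with ω h
    have := h.1; have := hη.trans h.2
    simp only [Pi.zero_apply]; positivity
  have hm : AEStronglyMeasurable (fun ω => G ω ^ q * ξ ω ^ r) (ℙ : Measure Ω) := by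
    refine Measurable.aestronglyMeasurable ?_; fun_prop
  constructor
  · refine ⟨hm, ?_⟩
    rw [hasFiniteIntegral_iff_ofReal hnn]
    have : (ℙ : Measure Ω).restrict {ω | η < ξ ω} = ℙ :=
      Measure.restrict_eq_self_of_ae_mem (by filter_upwards [hpos] with ω h using h.2)
    rw [← this, key_lint G ξ hG hξ η b hη hlaw hb q r η le_rfl hr]
    exact ENNReal.ofReal_lt_top
  · rw [integral_eq_lintegral_of_nonneg_ae (ae_restrict_of_ae hnn) hm.restrict,
      key_lint G ξ hG hξ η b hη hlaw hb q r x hx hr, ENNReal.toReal_ofReal]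
    have : 0 < b - 1 := by linarith
    have : 0 < (b - 1) * (q+1) - r := by linarith
    have := hη.trans_le hx
    positivity


lemma key_G (q : ℕ) (x : ℝ) (hx : η ≤ x) :
    Integrable (fun ω => G ω ^ q) ℙ ∧
    ∫ ω in {ω | x < ξ ω}, G ω ^ q =
      (q.factorial : ℝ) * η ^ ((b-1) * (q+1)) * x ^ (- ((b-1) * (q+1))) := by
  have hb1 : 0 < b - 1 := by linarith
  have h := key_int G ξ hG hξ η b hη hlaw hb q 0 x hx (by positivity)
  simp only [Real.rpow_zero, mul_one, zero_sub, sub_zero] at h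
  refine ⟨h.1, h.2.trans ?_⟩
  rw [Nat.factorial_succ]
  push_cast
  field_simp

lemma key_X (x : ℝ) (hx : η ≤ x) :
    Integrable ξ ℙ ∧
    ∫ ω in {ω | x < ξ ω}, ξ ω =
      (b - 1) / (b - 2) * η ^ (b-1) * x ^ (1 - (b-1)) := by
  have h := key_int G ξ hG hξ η b hη hlaw hb 0 1 x hx (by push_cast; linarith)
  simp only [Real.rpow_one, pow_zero, one_mul] at h
  refine ⟨h.1, h.2.trans ?_⟩
  have : b - 2 ≠ 0 := by linarith
  have e : b - 1 - 1 = b - 2 := by ring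
  simp [e]
  field_simp

lemma lower_G (q : ℕ) (m : ℝ) (hm : η ≤ m) :
    (q.factorial : ℝ) * η ^ ((b-1) * (q+1)) * m ^ (- ((b-1) * (q+1)))
      ≤ ∫ ω in {ω | m < G ω + ξ ω}, G ω ^ q := by
  have hpos := ae_pos G ξ hG hξ η b hη hlaw hb
  have h := key_G G ξ hG hξ η b hη hlaw hb q m hm
  rw [← h.2]
  refine setIntegral_mono_set h.1.integrableOn (ae_restrict_of_ae ?_) ?_
  · filter_upwards [hpos] with ω h
    have := h.1
    simp only [Pi.zero_apply]; positivity
  · filter_upwards [hpos] with ω h h2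
    have h3 : m < ξ ω := h2
    show m < G ω + ξ ω
    linarith [h.1]

lemma upper_G (q k : ℕ) (m : ℝ) (hm : 2 * η ≤ m) (hm1 : η + 1 ≤ m) :
    ∫ ω in {ω | m < G ω + ξ ω}, G ω ^ q ≤
    (q.factorial : ℝ) * η ^ ((b-1) * (q+1)) * (m-1) ^ (- ((b-1) * (q+1)))
    + (2 / m) ^ k * (∫ ω, G ω ^ (q + k))
    + ((q+1).factorial : ℝ) * η ^ ((b-1) * (q+1+1)) * (m/2) ^ (- ((b-1) * (q+1+1))) := by
  have hpos := ae_pos G ξ hG hξ η b hη hlaw hb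
  have h1 := key_G G ξ hG hξ η b hη hlaw hb q (m-1) (by linarith)
  have h2 := key_G G ξ hG hξ η b hη hlaw hb (q+k) η le_rfl
  have h3 := key_G G ξ hG hξ η b hη hlaw hb (q+1) (m/2) (by linarith)
  have h4 := h3.2
  push_cast at h4
  rw [← h1.2, ← h4, ← integral_const_mul]
  have m1 : MeasurableSet {ω | m < G ω + ξ ω} := measurableSet_lt measurable_const (hG.add hξ)
  have m2 : MeasurableSet {ω | m - 1 < ξ ω} := measurableSet_lt measurable_const hξ
  have m3 : MeasurableSet {ω | m / 2 < ξ ω} := measurableSet_lt measurable_const hξ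
  have i12 : Integrable (fun ω => {ω | m - 1 < ξ ω}.indicator (fun ω => G ω ^ q) ω +
      (2 / m) ^ k * G ω ^ (q + k)) ℙ := (h1.1.indicator m2).add (h2.1.const_mul _)
  rw [← integral_indicator m1, ← integral_indicator m2, ← integral_indicator m3,
    ← integral_add (h1.1.indicator m2) (h2.1.const_mul _),
    ← integral_add i12 (h3.1.indicator m3)]
  refine integral_mono_ae (h1.1.indicator m1)
    (i12.add (h3.1.indicator m3)) ?_
  filter_upwards [hpos] with ω h
  have hg := h.1
  have hm0 : 0 < m := by linarith
  have t1 : 0 ≤ {ω | m - 1 < ξ ω}.indicator (fun ω => G ω ^ q) ω := by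
    simp only [Set.indicator]; split_ifs <;> positivity
  have t2 : 0 ≤ (2 / m) ^ k * G ω ^ (q + k) := by positivity
  have t3 : 0 ≤ {ω | m / 2 < ξ ω}.indicator (fun ω => G ω ^ (q+1)) ω := by
    simp only [Set.indicator]; split_ifs <;> positivity
  by_cases hA : m < G ω + ξ ω
  swap
  · rw [Set.indicator_of_notMem (show ω ∉ {ω | m < G ω + ξ ω} from hA)]
    positivity
  rw [Set.indicator_of_mem (show ω ∈ {ω | m < G ω + ξ ω} from hA)]
  by_cases hB : m - 1 < ξ ω
  · rw [Set.indicator_of_mem (show ω ∈ {ω | m - 1 < ξ ω} from hB)]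
    linarith
  by_cases hC : m / 2 < ξ ω
  · rw [Set.indicator_of_mem (show ω ∈ {ω | m / 2 < ξ ω} from hC)] at t3 ⊢
    have : G ω ^ q ≤ G ω ^ (q+1) := pow_le_pow_right₀ (by linarith) (by omega)
    linarith
  · have : 1 ≤ (2 / m) * G ω := by
      rw [div_mul_eq_mul_div, le_div_iff₀ hm0]; linarith
    have h5 : 1 ≤ ((2 / m) * G ω) ^ k := one_le_pow₀ this
    have h6 : G ω ^ q ≤ (2 / m) ^ k * G ω ^ (q + k) := by
      have h7 : 0 ≤ G ω ^ q := by positivity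
      calc G ω ^ q ≤ G ω ^ q * ((2 / m) * G ω) ^ k := le_mul_of_one_le_right h7 h5
        _ = _ := by rw [mul_pow, pow_add]; ring
    linarith

lemma lim_G (q : ℕ) :
    Tendsto (fun m : ℝ => m ^ ((b-1) * (q+1)) * ∫ ω in {ω | m < G ω + ξ ω}, G ω ^ q) atTop
      (nhds ((q.factorial : ℝ) * η ^ ((b-1) * (q+1)))) := by
  have hb1 : 0 < b - 1 := by linarith
  set s : ℝ := (b-1) * (q+1) with hs
  have hs0 : 0 < s := by positivity
  obtain ⟨k, hk⟩ := exists_nat_gt s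
  set J : ℝ := (q.factorial : ℝ) * η ^ s
  set c : ℝ := ∫ ω, G ω ^ (q + k)
  set J' : ℝ := ((q+1).factorial : ℝ) * η ^ ((b-1) * (q+1+1))
  have u1 : Tendsto (fun m : ℝ => J * (m / (m - 1)) ^ s) atTop (nhds (J * 1 ^ s)) := by
    refine Tendsto.const_mul _ (Tendsto.rpow_const ?_ (Or.inl one_ne_zero))
    have : Tendsto (fun m : ℝ => 1 + (m - 1)⁻¹) atTop (nhds (1 + 0)) :=
      tendsto_const_nhds.add (tendsto_inv_atTop_zero.comp (tendsto_atTop_add_const_right _ (-1) tendsto_id))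
    rw [add_zero] at this
    refine this.congr' ?_
    filter_upwards [eventually_gt_atTop 1] with m hm
    have : m - 1 ≠ 0 := by linarith
    field_simp
    ring
  have u2 : Tendsto (fun m : ℝ => 2 ^ k * c * m ^ (-((k:ℝ) - s))) atTop (nhds (2 ^ k * c * 0)) :=
    (tendsto_rpow_neg_atTop (by linarith)).const_mul _
  have u3 : Tendsto (fun m : ℝ => J' * (1/2) ^ (-((b-1) * (q+1+1))) * m ^ (-(b-1))) atTop
      (nhds (J' * (1/2) ^ (-((b-1) * (q+1+1))) * 0)) :=
    (tendsto_rpow_neg_atTop (by linarith)).const_mul _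
  have u := (u1.add u2).add u3
  simp only [Real.one_rpow, mul_one, mul_zero, add_zero] at u
  refine tendsto_of_tendsto_of_tendsto_of_le_of_le' tendsto_const_nhds u ?_ ?_
  · filter_upwards [eventually_ge_atTop η] with m hm
    have hm0 : 0 < m := by linarith
    have := lower_G G ξ hG hξ η b hη hlaw hb q m hm
    have h2 := mul_le_mul_of_nonneg_left this (show 0 ≤ m ^ s by positivity)
    refine le_trans (le_of_eq ?_) h2
    rw [← hs, Real.rpow_neg hm0.le]
    have : m ^ s ≠ 0 := by positivity
    field_simp
    rfl
  · filter_upwards [eventually_ge_atTop (2 * η), eventually_ge_atTop (η + 1)] with m hm hm1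
    have hm0 : 0 < m := by linarith
    have hm2 : 0 < m - 1 := by linarith
    have := upper_G G ξ hG hξ η b hη hlaw hb q k m hm hm1
    have h2 := mul_le_mul_of_nonneg_left this (show 0 ≤ m ^ s by positivity)
    refine h2.trans (le_of_eq ?_)
    have v1 : (m - 1) ^ (-s) * m ^ s = (m / (m-1)) ^ s := by
      rw [Real.div_rpow hm0.le hm2.le, Real.rpow_neg hm2.le]; field_simp
    have v2 : m ^ s * (2 / m) ^ k = 2 ^ k * m ^ (-((k:ℝ) - s)) := by
      rw [neg_sub, Real.rpow_sub hm0, Real.rpow_natCast, div_pow]; ring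
    have v3 : m ^ s * (m/2) ^ (- ((b-1) * (q+1+1)))
        = (1/2) ^ (-((b-1) * (q+1+1))) * m ^ (-(b-1)) := by
      have : m / 2 = m * (1/2) := by ring
      rw [this, Real.mul_rpow hm0.le (by norm_num), ← mul_assoc, ← Real.rpow_add hm0, mul_comm]
      congr 2
      rw [hs]; ring
    rw [mul_add, mul_add, ← v1]
    linear_combination c * v2 + J' * v3

lemma lim_X :
    Tendsto (fun m : ℝ => m ^ (b-2) * ∫ ω in {ω | m < G ω + ξ ω}, ξ ω) atTop
      (nhds ((b - 1) / (b - 2) * η ^ (b-1))) := by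
  have hpos := ae_pos G ξ hG hξ η b hη hlaw hb
  have l := lim_G G ξ hG hξ η b hη hlaw hb 0
  simp only [Nat.factorial_zero, Nat.cast_zero, zero_add, mul_one, Nat.cast_one, one_mul] at l
  set L : ℝ := (b - 1) / (b - 2) * η ^ (b-1)
  have u := (l.sub_const (η ^ (b-1))).const_add L
  rw [sub_self, add_zero] at u
  have ident : ∀ m : ℝ, η ≤ m → m ^ (b-2) * ∫ ω in {ω | m < ξ ω}, ξ ω = L := by
    intro m hm
    have hm0 : 0 < m := by linarith
    rw [(key_X G ξ hG hξ η b hη hlaw hb m hm).2]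
    have : m ^ (b-2) * m ^ (1 - (b-1)) = 1 := by
      rw [← Real.rpow_add hm0]
      refine (congrArg (fun t => m ^ t) ?_).trans (Real.rpow_zero _)
      ring
    linear_combination L * this
  have hXi := (key_X G ξ hG hξ η b hη hlaw hb η le_rfl).1
  refine tendsto_of_tendsto_of_tendsto_of_le_of_le' tendsto_const_nhds u ?_ ?_
  · filter_upwards [eventually_ge_atTop η] with m hm
    have hm0 : 0 < m := by linarith
    rw [← ident m hm]
    refine mul_le_mul_of_nonneg_left ?_ (by positivity)
    refine setIntegral_mono_set hXi.integrableOn (ae_restrict_of_ae ?_) ?_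
    · filter_upwards [hpos] with ω h
      exact (hη.trans h.2).le
    · filter_upwards [hpos] with ω h h2
      have h3 : m < ξ ω := h2
      show m < G ω + ξ ω
      linarith [h.1]
  · filter_upwards [eventually_ge_atTop η] with m hm
    have hm0 : 0 < m := by linarith
    have hGi := key_G G ξ hG hξ η b hη hlaw hb 0 m hm
    have hB := hGi.2
    simp only [Nat.factorial_zero, Nat.cast_zero, zero_add, mul_one, Nat.cast_one, one_mul] at hB
    have m1 : MeasurableSet {ω | m < G ω + ξ ω} := measurableSet_lt measurable_const (hG.add hξ)
    have m2 : MeasurableSet {ω | m < ξ ω} := measurableSet_lt measurable_const hξ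
    have main : ∫ ω in {ω | m < G ω + ξ ω}, ξ ω ≤ (∫ ω in {ω | m < ξ ω}, ξ ω) +
        m * ((∫ ω in {ω | m < G ω + ξ ω}, G ω ^ 0) - ∫ ω in {ω | m < ξ ω}, G ω ^ 0) := by
      have i12 : Integrable (fun ω => m * ({ω | m < G ω + ξ ω}.indicator (fun ω => G ω ^ 0) ω -
          {ω | m < ξ ω}.indicator (fun ω => G ω ^ 0) ω)) ℙ :=
        ((hGi.1.indicator m1).sub (hGi.1.indicator m2)).const_mul m
      rw [← integral_indicator m1, ← integral_indicator m2, ← integral_indicator m1,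
        ← integral_indicator m2,
        ← integral_sub (hGi.1.indicator m1) (hGi.1.indicator m2), ← integral_const_mul,
        ← integral_add (hXi.indicator m2) i12]
      refine integral_mono_ae (hXi.indicator m1) ((hXi.indicator m2).add i12) ?_
      filter_upwards [hpos] with ω h
      by_cases hA : m < G ω + ξ ω <;> by_cases hB : m < ξ ω
      · simp [Set.indicator, hA, hB]
      · simp [Set.indicator, hA, hB]; linarith
      · linarith [h.1]
      · simp [Set.indicator, hA, hB]
    have h2 := mul_le_mul_of_nonneg_left main (show 0 ≤ m ^ (b-2) by positivity)
    refine h2.trans (le_of_eq ?_)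
    rw [mul_add, ident m hm, hB]
    have e1 : m ^ (b-1) = m ^ (b-2) * m := by
      rw [← Real.rpow_add_one hm0.ne']; congr 1; ring
    have e2 : m ^ (b-1) * m ^ (-(b-1)) = 1 := by
      rw [← Real.rpow_add hm0]
      refine (congrArg (fun t => m ^ t) ?_).trans (Real.rpow_zero _)
      ring
    rw [e1] at e2 ⊢
    linear_combination (-η ^ (b-1)) * e2

end

/-- Strong Goodhart in the exponential-goal/heavy-tailed-discrepancy model (`b > 2`):
`E[G | M > m] ~ η^{b-1}/m^{b-1} → 0` while `E[ξ | M > m] ~ m(b-1)/(b-2) → ∞`. -/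
theorem exp_heavy_strong_goodhart {Ω : Type*} [MeasureSpace Ω] [IsProbabilityMeasure (ℙ : Measure Ω)]
    (G ξ : Ω → ℝ) (hG : Measurable G) (hξ : Measurable ξ) (η b : ℝ) (hη : 0 < η)
    (hlaw : Measure.map (fun ω => (G ω, ξ ω)) ℙ =
      (volume : Measure (ℝ × ℝ)).withDensity (fun p =>
        ENNReal.ofReal (if 0 < p.1 ∧ η < p.2 then
          Real.exp (-p.1) *
            (p.1 * Real.exp (-p.1 * ((p.2 / η) ^ (b - 1) - 1)) *
              p.2 ^ (b - 2) / η ^ (b - 1) * (b - 1))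
        else 0))) (hb : 2 < b) :
    ((fun m : ℝ => condExpEvent G {ω | m < G ω + ξ ω})
        ~[atTop] (fun m : ℝ => η ^ (b - 1) / m ^ (b - 1))) ∧
    Tendsto (fun m : ℝ => condExpEvent G {ω | m < G ω + ξ ω}) atTop (nhds 0) ∧
    ((fun m : ℝ => condExpEvent ξ {ω | m < G ω + ξ ω})
        ~[atTop] (fun m : ℝ => m * (b - 1) / (b - 2))) ∧
    Tendsto (fun m : ℝ => condExpEvent ξ {ω | m < G ω + ξ ω}) atTop atTop := by
  have hlaw' : Measure.map (fun ω => (G ω, ξ ω)) ℙ =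
      (volume : Measure (ℝ × ℝ)).withDensity (fun p => ENNReal.ofReal (gdens η b p)) := hlaw
  have l0 := lim_G G ξ hG hξ η b hη hlaw' hb 0
  have l1 := lim_G G ξ hG hξ η b hη hlaw' hb 1
  have lx := lim_X G ξ hG hξ η b hη hlaw' hb
  have hP : ∀ m : ℝ, (ℙ {ω | m < G ω + ξ ω}).toReal = ∫ ω in {ω | m < G ω + ξ ω}, G ω ^ 0 := by
    intro m
    simp [measureReal_def]
  simp only [Nat.factorial_zero, Nat.cast_zero, zero_add, mul_one, Nat.cast_one, one_mul,
    Nat.factorial_one, pow_one] at l0 l1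
  have hb1 : 0 < b - 1 := by linarith
  have hb2 : 0 < b - 2 := by linarith
  have hη1 : 0 < η ^ (b - 1) := by positivity
  have hη2 : η ^ ((b - 1) * (1 + 1)) = η ^ (b-1) * η ^ (b-1) := by
    rw [← Real.rpow_add hη]; congr 1; ring
  have A1 : (fun m : ℝ => condExpEvent G {ω | m < G ω + ξ ω})
        ~[atTop] (fun m : ℝ => η ^ (b - 1) / m ^ (b - 1)) := by
    refine (isEquivalent_iff_tendsto_one ?_).2 ?_
    · filter_upwards [eventually_gt_atTop 0] with m hm
      positivity
    have := (l1.div l0 hη1.ne').div_const (η ^ (b-1))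
    rw [hη2, mul_div_assoc, div_self hη1.ne', mul_one, div_self hη1.ne'] at this
    refine this.congr' ?_
    filter_upwards [eventually_gt_atTop 0] with m hm
    have e : m ^ ((b - 1) * (1 + 1)) = m ^ (b-1) * m ^ (b-1) := by
      rw [← Real.rpow_add hm]; congr 1; ring
    have hm1 : 0 < m ^ (b-1) := by positivity
    simp only [Pi.div_apply, condExpEvent, hP, e]
    field_simp
  have A2 : (fun m : ℝ => condExpEvent ξ {ω | m < G ω + ξ ω})
        ~[atTop] (fun m : ℝ => m * (b - 1) / (b - 2)) := by
    refine (isEquivalent_iff_tendsto_one ?_).2 ?_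
    · filter_upwards [eventually_gt_atTop 0] with m hm
      positivity
    have := (lx.div l0 hη1.ne').div_const ((b - 1) / (b - 2))
    rw [mul_div_assoc, div_self hη1.ne', mul_one, div_self (by positivity)] at this
    refine this.congr' ?_
    filter_upwards [eventually_gt_atTop 0] with m hm
    have e : m ^ (b - 1) = m ^ (b-2) * m := by
      rw [← Real.rpow_add_one hm.ne']; congr 1; ring
    have hm1 : 0 < m ^ (b-2) := by positivity
    simp only [Pi.div_apply, condExpEvent, hP, e]
    field_simp
  refine ⟨A1, A1.symm.tendsto_nhds ?_, A2, A2.symm.tendsto_atTop ?_⟩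
  · exact (tendsto_rpow_atTop hb1).const_div_atTop _
  · have : Tendsto (fun m : ℝ => m * ((b - 1) / (b - 2))) atTop atTop :=
      tendsto_id.atTop_mul_const (by positivity)
    simpa only [mul_div_assoc] using this
end
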